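/- (Minimax justification of least squares.) Let (x_1,y_1),…,(x_n,y_n) ∈ ℝ^d × ℝ be given samples with empirical marginal P̂_X on {x_1,…,x_n}, and define Γ := { P_{X,Y} : P_X = P̂_X, E_P[YX] = (1/n)Σ_{i=1}^n y_i x_i, E_P[Y²] = (1/n)Σ_{i=1}^n y_i² }. Then the minimax problem min_{ψ: ℝ^d → ℝ} max_{P ∈ Γ} E_P[ (Y − ψ(X))² ] is solved by a linear rule ψ*(x) = β*ᵀx, where β* is a solution of the least-squares problem min_β (1/n) Σ_{i=1}^n ( y_i − βᵀx_i )². -/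

import Mathlib

/-!
Let `β` satisfy the normal equations and let `R` be its mean squared residual. Expanding the square,
the risk of the rule `x ↦ βᵀx` under `P ∈ Γ` depends on `P` only through the quantities fixed by
`Γ`, so it equals `R` for every `P ∈ Γ` (`GammaLS.integral_linear`). Conversely, let `P₀` be the law
under which `X` is uniform on the samples and `Y = βᵀX ± √R` with an independent fair sign
(`worstLaw`). The normal equations give `P₀ ∈ Γ` (`worstLaw_mem`), and since `E[Y | X] = βᵀX` under
`P₀` the risk of any `ψ` is `R + E[(βᵀX - ψ(X))²] ≥ R`. The real-valued supremum for `ψ` is a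
genuine one because `(Y - ψ(X))² ≤ 2Y² + 2ψ(X)²` has a `P`-independent expectation on `Γ`
(`GammaLS.integral_le`).
-/

open MeasureTheory
open scoped ENNReal

/-- The distribution set `Γ` for the least-squares minimax problem: all joint laws `P` of
`(X,Y) ∈ ℝ^d × ℝ` whose `X`-marginal is the empirical marginal of the samples and whose
cross-moments `E[YX]` and second moment `E[Y²]` match the empirical values. -/
def GammaLS (d n : ℕ) (xs : Fin n → Fin d → ℝ) (ys : Fin n → ℝ) :
    Set (Measure ((Fin d → ℝ) × ℝ)) :=
  {P | IsProbabilityMeasure P ∧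
    P.fst = (n : ℝ≥0∞)⁻¹ • ∑ i, Measure.dirac (xs i) ∧
    Integrable (fun p => p.2 ^ 2) P ∧
    (∀ j, Integrable (fun p => p.2 * p.1 j) P) ∧
    (∀ j, (∫ p, p.2 * p.1 j ∂P) = (n : ℝ)⁻¹ * ∑ i, ys i * xs i j) ∧
    (∫ p, p.2 ^ 2 ∂P) = (n : ℝ)⁻¹ * ∑ i, ys i ^ 2}

/-- A coefficient vector satisfying the normal equations exists: project the vector of responses
orthogonally onto the range of the design matrix. -/
lemma exists_normal_equations (d n : ℕ) (xs : Fin n → Fin d → ℝ) (ys : Fin n → ℝ) :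
    ∃ β : Fin d → ℝ, ∀ v : Fin d → ℝ,
      ∑ i, (ys i - ∑ j, β j * xs i j) * (∑ j, v j * xs i j) = 0 := by
  let A : (Fin d → ℝ) →ₗ[ℝ] EuclideanSpace ℝ (Fin n) :=
    { toFun := fun v => WithLp.toLp 2 fun i => ∑ j, v j * xs i j
      map_add' := fun u v => by
        ext i
        simp [add_mul, Finset.sum_add_distrib]
      map_smul' := fun c v => by
        ext i
        simp [mul_assoc, Finset.mul_sum] }
  let y : EuclideanSpace ℝ (Fin n) := WithLp.toLp 2 ys
  obtain ⟨β, hβ⟩ := (LinearMap.range A).starProjection_apply_mem y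
  refine ⟨β, fun v => ?_⟩
  have h := Submodule.starProjection_inner_eq_zero (K := LinearMap.range A) y (A v)
    (LinearMap.mem_range_self A v)
  rw [← hβ] at h
  simpa [PiLp.inner_apply, A, y, mul_comm] using h

/-- A solution of the normal equations is a least-squares minimiser, by Pythagoras. -/
lemma least_squares_of_normal {d n : ℕ} {xs : Fin n → Fin d → ℝ} {ys : Fin n → ℝ}
    {β : Fin d → ℝ}
    (hβ : ∀ v : Fin d → ℝ, ∑ i, (ys i - ∑ j, β j * xs i j) * (∑ j, v j * xs i j) = 0)
    (β' : Fin d → ℝ) :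
    ∑ i, (ys i - ∑ j, β j * xs i j) ^ 2 ≤ ∑ i, (ys i - ∑ j, β' j * xs i j) ^ 2 := by
  have h : ∑ i, (ys i - ∑ j, β' j * xs i j) ^ 2 = ∑ i, (ys i - ∑ j, β j * xs i j) ^ 2
      + 2 * ∑ i, (ys i - ∑ j, β j * xs i j) * (∑ j, (β - β') j * xs i j)
      + ∑ i, (∑ j, (β - β') j * xs i j) ^ 2 := by
    rw [Finset.mul_sum, ← Finset.sum_add_distrib, ← Finset.sum_add_distrib]
    refine Finset.sum_congr rfl fun i _ => ?_
    simp only [Pi.sub_apply, sub_mul, Finset.sum_sub_distrib]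
    ring
  have h2 : 0 ≤ ∑ i, (∑ j, (β - β') j * xs i j) ^ 2 := Finset.sum_nonneg fun i _ => sq_nonneg _
  rw [h, hβ]
  linarith

lemma GammaLS.integrable_fst {d n : ℕ} (hn : 0 < n) {xs : Fin n → Fin d → ℝ} {ys : Fin n → ℝ}
    {P : Measure ((Fin d → ℝ) × ℝ)} (hP : P ∈ GammaLS d n xs ys)
    {g : (Fin d → ℝ) → ℝ} (hg : Measurable g) : Integrable (fun p => g p.1) P := by
  have h : Integrable g P.fst := by
    rw [hP.2.1]
    refine Integrable.smul_measure ?_ (by simp [hn.ne'])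
    rw [integrable_finsetSum_measure]
    exact fun i _ => integrable_dirac (by simp)
  exact (integrable_map_measure hg.aestronglyMeasurable measurable_fst.aemeasurable).1 h

lemma GammaLS.integral_fst {d n : ℕ} {xs : Fin n → Fin d → ℝ} {ys : Fin n → ℝ}
    {P : Measure ((Fin d → ℝ) × ℝ)} (hP : P ∈ GammaLS d n xs ys)
    {g : (Fin d → ℝ) → ℝ} (hg : Measurable g) :
    ∫ p, g p.1 ∂P = (n : ℝ)⁻¹ * ∑ i, g (xs i) := by
  have h : ∫ p, g p.1 ∂P = ∫ x, g x ∂P.fst :=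
    (integral_map measurable_fst.aemeasurable hg.aestronglyMeasurable).symm
  rw [h, hP.2.1, integral_smul_measure, integral_finsetSum_measure]
  · simp
  · exact fun i _ => integrable_dirac (by simp)

/-- All laws in `Γ` give a linear rule the same risk, namely its empirical risk. -/
lemma GammaLS.integral_linear {d n : ℕ} (hn : 0 < n) {xs : Fin n → Fin d → ℝ} {ys : Fin n → ℝ}
    {P : Measure ((Fin d → ℝ) × ℝ)} (hP : P ∈ GammaLS d n xs ys) (β : Fin d → ℝ) :
    ∫ p, (p.2 - ∑ j, β j * p.1 j) ^ 2 ∂P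
      = (n : ℝ)⁻¹ * ∑ i, (ys i - ∑ j, β j * xs i j) ^ 2 := by
  have hm : Measurable fun x : Fin d → ℝ => (∑ j, β j * x j) ^ 2 := by fun_prop
  have i3 := GammaLS.integrable_fst hn hP hm
  have e3 := GammaLS.integral_fst hP hm
  obtain ⟨_, _, i1, i2, e2, e1⟩ := hP
  have i2' : Integrable (fun p => ∑ j, 2 * β j * (p.2 * p.1 j)) P :=
    integrable_finsetSum _ fun j _ => (i2 j).const_mul _
  have e2' : ∫ p, ∑ j, 2 * β j * (p.2 * p.1 j) ∂P
      = (n : ℝ)⁻¹ * ∑ i, 2 * ys i * ∑ j, β j * xs i j := by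
    rw [integral_finsetSum _ fun j _ => (i2 j).const_mul _]
    simp only [integral_const_mul, e2, Finset.mul_sum]
    rw [Finset.sum_comm]
    exact Finset.sum_congr rfl fun i _ => Finset.sum_congr rfl fun j _ => by ring
  have h : (fun p : (Fin d → ℝ) × ℝ => (p.2 - ∑ j, β j * p.1 j) ^ 2)
      = fun p => (p.2 ^ 2 - ∑ j, 2 * β j * (p.2 * p.1 j)) + (∑ j, β j * p.1 j) ^ 2 := by
    funext p
    have : ∑ j, 2 * β j * (p.2 * p.1 j) = 2 * p.2 * ∑ j, β j * p.1 j := by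
      rw [Finset.mul_sum]
      exact Finset.sum_congr rfl fun j _ => by ring
    rw [this]
    ring
  have i12 : Integrable (fun p => p.2 ^ 2 - ∑ j, 2 * β j * (p.2 * p.1 j)) P := i1.sub i2'
  rw [h, integral_add i12 i3, integral_sub i1 i2', e1, e2', e3, ← mul_sub, ← mul_add,
    ← Finset.sum_sub_distrib, ← Finset.sum_add_distrib]
  congr 1
  exact Finset.sum_congr rfl fun i _ => by ring

/-- The risk of a fixed rule is bounded uniformly over `Γ`. -/
lemma GammaLS.integral_le {d n : ℕ} (hn : 0 < n) {xs : Fin n → Fin d → ℝ} {ys : Fin n → ℝ}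
    {P : Measure ((Fin d → ℝ) × ℝ)} (hP : P ∈ GammaLS d n xs ys)
    {ψ : (Fin d → ℝ) → ℝ} (hψ : Measurable ψ) :
    ∫ p, (p.2 - ψ p.1) ^ 2 ∂P
      ≤ 2 * ((n : ℝ)⁻¹ * ∑ i, ys i ^ 2) + 2 * ((n : ℝ)⁻¹ * ∑ i, ψ (xs i) ^ 2) := by
  have hm : Measurable fun x => ψ x ^ 2 := hψ.pow_const 2
  have i3 := GammaLS.integrable_fst hn hP hm
  have e3 := GammaLS.integral_fst hP hm
  obtain ⟨_, _, i1, _, _, e1⟩ := hP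
  rw [← e1, ← e3, ← integral_const_mul, ← integral_const_mul,
    ← integral_add (i1.const_mul 2) (i3.const_mul 2)]
  refine integral_mono_of_nonneg (Filter.Eventually.of_forall fun p => sq_nonneg _)
    ((i1.const_mul 2).add (i3.const_mul 2)) (Filter.Eventually.of_forall fun p => ?_)
  simp only
  nlinarith [sq_nonneg (p.2 + ψ p.1)]

/-- The law of `(X, m(X) ± r)`, where `X` is uniform on the samples (`m i` is the value of `m` at
`xs i`) and the sign is fair and independent of `X`. -/
noncomputable def worstLaw {d n : ℕ} (xs : Fin n → Fin d → ℝ) (m : Fin n → ℝ) (r : ℝ) :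
    Measure ((Fin d → ℝ) × ℝ) :=
  (n : ℝ≥0∞)⁻¹ • ∑ i, (2 : ℝ≥0∞)⁻¹ •
    (Measure.dirac (xs i, m i + r) + Measure.dirac (xs i, m i - r))

lemma integrable_worstLaw {d n : ℕ} (hn : 0 < n) (xs : Fin n → Fin d → ℝ) (m : Fin n → ℝ) (r : ℝ)
    (f : (Fin d → ℝ) × ℝ → ℝ) : Integrable f (worstLaw xs m r) := by
  refine Integrable.smul_measure ?_ (by simp [hn.ne'])
  rw [integrable_finsetSum_measure]
  exact fun i _ => ((integrable_dirac (by simp)).add_measure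
    (integrable_dirac (by simp))).smul_measure (by simp)

lemma integral_worstLaw {d n : ℕ} (xs : Fin n → Fin d → ℝ) (m : Fin n → ℝ) (r : ℝ)
    (f : (Fin d → ℝ) × ℝ → ℝ) :
    ∫ p, f p ∂(worstLaw xs m r)
      = (n : ℝ)⁻¹ * ∑ i, 2⁻¹ * (f (xs i, m i + r) + f (xs i, m i - r)) := by
  have hi (i : Fin n) (s : ℝ) : Integrable f (Measure.dirac (xs i, s)) :=
    integrable_dirac (by simp)
  rw [worstLaw, integral_smul_measure, integral_finsetSum_measure]
  · simp only [integral_smul_measure, integral_add_measure (hi _ _) (hi _ _), integral_dirac]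
    simp
  · exact fun i _ => ((hi _ _).add_measure (hi _ _)).smul_measure (by simp)

lemma fst_worstLaw {d n : ℕ} (xs : Fin n → Fin d → ℝ) (m : Fin n → ℝ) (r : ℝ) :
    (worstLaw xs m r).fst = (n : ℝ≥0∞)⁻¹ • ∑ i, Measure.dirac (xs i) := by
  ext s hs
  rw [Measure.fst_apply hs]
  simp only [worstLaw, Measure.smul_apply, Measure.finsetSum_apply, Measure.add_apply,
    Measure.dirac_apply' _ (measurable_fst hs), Measure.dirac_apply' _ hs, smul_eq_mul]
  congr 1
  refine Finset.sum_congr rfl fun i _ => ?_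
  change 2⁻¹ * (s.indicator 1 (xs i) + s.indicator 1 (xs i)) = _
  rw [← two_mul, ← mul_assoc, ENNReal.inv_mul_cancel (by simp) (by simp), one_mul]

lemma worstLaw_mem {d n : ℕ} (hn : 0 < n) {xs : Fin n → Fin d → ℝ} {ys : Fin n → ℝ}
    {β : Fin d → ℝ}
    (hβ : ∀ v : Fin d → ℝ, ∑ i, (ys i - ∑ j, β j * xs i j) * (∑ j, v j * xs i j) = 0)
    {r : ℝ} (hr : r ^ 2 = (n : ℝ)⁻¹ * ∑ i, (ys i - ∑ j, β j * xs i j) ^ 2) :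
    worstLaw xs (fun i => ∑ j, β j * xs i j) r ∈ GammaLS d n xs ys := by
  have hn0 : (n : ℝ) ≠ 0 := by exact_mod_cast hn.ne'
  refine ⟨⟨?_⟩, fst_worstLaw _ _ _, integrable_worstLaw hn _ _ _ _,
    fun j => integrable_worstLaw hn _ _ _ _, fun k => ?_, ?_⟩
  · rw [← Measure.fst_univ, fst_worstLaw]
    simp [ENNReal.inv_mul_cancel, hn.ne']
  · rw [integral_worstLaw]
    have h := hβ (Pi.single k 1)
    simp only [Pi.single_apply, ite_mul, one_mul, zero_mul, Finset.sum_ite_eq', Finset.mem_univ,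
      if_true, sub_mul, Finset.sum_sub_distrib] at h
    rw [sub_eq_zero.1 h]
    congr 1
    exact Finset.sum_congr rfl fun i _ => by ring
  · rw [integral_worstLaw]
    have h := hβ β
    have h1 : ∑ i, 2⁻¹ * ((∑ j, β j * xs i j + r) ^ 2 + (∑ j, β j * xs i j - r) ^ 2)
        = ∑ i, (∑ j, β j * xs i j) ^ 2 + n * r ^ 2 := by
      have : (n : ℝ) * r ^ 2 = ∑ _i : Fin n, r ^ 2 := by simp
      rw [this, ← Finset.sum_add_distrib]
      exact Finset.sum_congr rfl fun i _ => by ring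
    have h2 : ∑ i, ys i ^ 2 = ∑ i, (∑ j, β j * xs i j) ^ 2
        + 2 * ∑ i, (ys i - ∑ j, β j * xs i j) * (∑ j, β j * xs i j)
        + ∑ i, (ys i - ∑ j, β j * xs i j) ^ 2 := by
      rw [Finset.mul_sum, ← Finset.sum_add_distrib, ← Finset.sum_add_distrib]
      exact Finset.sum_congr rfl fun i _ => by ring
    rw [h1, h2, h, hr, mul_inv_cancel_left₀ hn0]
    ring

/-- Under `worstLaw xs m r` every rule has risk at least `r²`. -/
lemma le_integral_worstLaw {d n : ℕ} (hn : 0 < n) (xs : Fin n → Fin d → ℝ) (m : Fin n → ℝ) (r : ℝ)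
    (ψ : (Fin d → ℝ) → ℝ) :
    r ^ 2 ≤ ∫ p, (p.2 - ψ p.1) ^ 2 ∂(worstLaw xs m r) := by
  have hn0 : (0 : ℝ) < n := by exact_mod_cast hn
  rw [integral_worstLaw, inv_mul_eq_div, le_div_iff₀ hn0]
  calc r ^ 2 * n = ∑ _i : Fin n, r ^ 2 := by simp [mul_comm]
    _ ≤ _ := Finset.sum_le_sum fun i _ => by nlinarith [sq_nonneg (m i - ψ (xs i))]

/-- **Minimax justification of least squares.**
Given samples `(x_i, y_i) ∈ ℝ^d × ℝ`, the minimax problem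
`min_{ψ : ℝ^d → ℝ} max_{P ∈ Γ} E_P[(Y − ψ(X))²]` over the set `Γ = GammaLS` is solved by a
linear rule `ψ*(x) = β*ᵀx`, where `β*` solves the least-squares problem
`min_β (1/n) ∑_i (y_i − βᵀx_i)²`. -/
theorem minimax_least_squares (d n : ℕ) (hn : 0 < n)
    (xs : Fin n → Fin d → ℝ) (ys : Fin n → ℝ) :
    ∃ β : Fin d → ℝ,
      (∀ β' : Fin d → ℝ,
        (n : ℝ)⁻¹ * ∑ i, (ys i - ∑ j, β j * xs i j) ^ 2
          ≤ (n : ℝ)⁻¹ * ∑ i, (ys i - ∑ j, β' j * xs i j) ^ 2) ∧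
      ∀ ψ : (Fin d → ℝ) → ℝ, Measurable ψ →
        (⨆ P ∈ GammaLS d n xs ys, ∫ p, (p.2 - ∑ j, β j * p.1 j) ^ 2 ∂P)
          ≤ ⨆ P ∈ GammaLS d n xs ys, ∫ p, (p.2 - ψ p.1) ^ 2 ∂P := by
  obtain ⟨β, hβ⟩ := exists_normal_equations d n xs ys
  refine ⟨β, fun β' => mul_le_mul_of_nonneg_left (least_squares_of_normal hβ β') (by positivity),
    fun ψ hψ => ?_⟩
  have hR : 0 ≤ (n : ℝ)⁻¹ * ∑ i, (ys i - ∑ j, β j * xs i j) ^ 2 := by positivity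
  have hr := Real.sq_sqrt hR
  have hP₀ := worstLaw_mem hn hβ hr
  have hle := le_integral_worstLaw hn xs (fun i => ∑ j, β j * xs i j)
    (Real.sqrt ((n : ℝ)⁻¹ * ∑ i, (ys i - ∑ j, β j * xs i j) ^ 2)) ψ
  rw [hr] at hle
  refine le_trans (b := (n : ℝ)⁻¹ * ∑ i, (ys i - ∑ j, β j * xs i j) ^ 2) ?_ (hle.trans ?_)
  · -- For `P ∉ Γ` the inner supremum is over the empty set, hence `0`, which is harmless.
    refine Real.iSup_le (fun P => Real.iSup_le (fun hP => ?_) hR) hR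
    exact (GammaLS.integral_linear hn hP β).le
  · refine le_trans ?_ (le_ciSup (f := fun P => ⨆ _ : P ∈ GammaLS d n xs ys,
      ∫ p, (p.2 - ψ p.1) ^ 2 ∂P) ?_ (worstLaw xs (fun i => ∑ j, β j * xs i j)
      (Real.sqrt ((n : ℝ)⁻¹ * ∑ i, (ys i - ∑ j, β j * xs i j) ^ 2))))
    · simp only [ciSup_pos hP₀, le_refl]
    · refine ⟨2 * ((n : ℝ)⁻¹ * ∑ i, ys i ^ 2) + 2 * ((n : ℝ)⁻¹ * ∑ i, ψ (xs i) ^ 2), ?_⟩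
      rintro _ ⟨P, rfl⟩
      exact Real.iSup_le (fun hP => GammaLS.integral_le hn hP hψ) (by positivity)
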